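/- Every senderbox-channel-compliant finite word is p2p-channel-compliant, and every p2p-channel-compliant finite word is bag-channel-compliant. -/

import Mathlib

/-!
Both implications are forward simulations (`NetArch.compliant_of_simulation`): a relation between
channel states that holds initially and is preserved by every step defined in the first
architecture, which in particular forces that step to be defined in the second one.

* From senderbox to p2p, the buffer of channel `(p, q)` is the subsequence of the senderbox of `p`
  formed by the messages addressed to `q`. If `(p, q, v)` heads the senderbox of `p`, it also heads
  this subsequence.
* From p2p to bag, the multiplicity of `(p, q, v)` in the bag equals its multiplicity in the buffer
  of channel `(p, q)`. A message at the head of its p2p buffer therefore occurs in the bag.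
-/

/-- Asynchronous events: send events `p▷q!v` and receive events `p▷q?v`. -/
inductive Event (P V : Type) where
  | send (p q : P) (v : V)
  | recv (p q : P) (v : V)
deriving DecidableEq

/-- The active participant of an event: the sender of a send, the receiver of a receive. -/
def Event.active {P V : Type} : Event P V → P
  | .send p _ _ => p
  | .recv _ q _ => q

/-- A network architecture: channels `C`, buffer contents `B`, a channel map,
partial insert/remove operations, and an empty buffer. -/
structure NetArch (P V C B : Type) where
  chan : P → P → C
  insert : P × P × V → B → Option B
  remove : P × P × V → B → Option B
  b0 : B

variable {P V C B : Type}

/-- Executing a single event on a channel state. -/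
def NetArch.step [DecidableEq C] (N : NetArch P V C B) :
    Event P V → (C → B) → Option (C → B)
  | .send p q v, ξ => (N.insert (p, q, v) (ξ (N.chan p q))).map (Function.update ξ (N.chan p q))
  | .recv p q v, ξ => (N.remove (p, q, v) (ξ (N.chan p q))).map (Function.update ξ (N.chan p q))

/-- Executing a finite word of events from a channel state. -/
def NetArch.runFrom [DecidableEq C] (N : NetArch P V C B) :
    List (Event P V) → (C → B) → Option (C → B)
  | [], ξ => some ξ
  | e :: w, ξ => (N.step e ξ).bind (N.runFrom w)

/-- The initial channel state: every channel holds the empty buffer. -/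
def NetArch.init (N : NetArch P V C B) : C → B := fun _ => N.b0

/-- A finite word is channel-compliant if executing it from the initial channel
state is defined at every step. -/
def NetArch.compliant [DecidableEq C] (N : NetArch P V C B) (w : List (Event P V)) : Prop :=
  (N.runFrom w N.init).isSome

/-- A finite word is channel-matched if it is channel-compliant and reaches the
initial (all-empty) channel state. -/
def NetArch.matched [DecidableEq C] (N : NetArch P V C B) (w : List (Event P V)) : Prop :=
  N.runFrom w N.init = some N.init

/-- Projection of a word onto the events in which participant `r` is active. -/
def proj [DecidableEq P] (r : P) (w : List (Event P V)) : List (Event P V) :=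
  w.filter (fun e => decide (e.active = r))

/-- Equality under local projection. -/
def equivP [DecidableEq P] (w₁ w₂ : List (Event P V)) : Prop :=
  ∀ r : P, proj r w₁ = proj r w₂

/-- `split` replaces every synchronous message exchange `(p,q,v)` by the two
consecutive asynchronous events `p▷q!v · p▷q?v`. -/
def split : List (P × P × V) → List (Event P V)
  | [] => []
  | m :: ρ => Event.send m.1 m.2.1 m.2.2 :: Event.recv m.1 m.2.1 m.2.2 :: split ρ

/-- FIFO insertion: append at the tail (always defined). -/
def fifoInsert {M : Type} (m : M) (b : List M) : Option (List M) := some (b ++ [m])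

/-- FIFO removal: defined iff the buffer has head `m`, removing the head. -/
def fifoRemove {M : Type} [DecidableEq M] (m : M) : List M → Option (List M)
  | [] => none
  | m' :: b => if m' = m then some b else none

/-- Multiset insertion: add one occurrence (always defined). -/
def bagInsert {M : Type} (m : M) (b : Multiset M) : Option (Multiset M) := some (m ::ₘ b)

/-- Multiset removal: defined iff `m ∈ b`, deleting one occurrence. -/
def bagRemove {M : Type} [DecidableEq M] (m : M) (b : Multiset M) : Option (Multiset M) :=
  if m ∈ b then some (b.erase m) else none

/-- Peer-to-peer FIFO architecture: one FIFO channel per sender-receiver pair. -/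
def p2p (P V : Type) [DecidableEq P] [DecidableEq V] :
    NetArch P V (P × P) (List (P × P × V)) :=
  ⟨fun p q => (p, q), fifoInsert, fifoRemove, []⟩

/-- Senderbox FIFO architecture: one FIFO channel per sender. -/
def sb (P V : Type) [DecidableEq P] [DecidableEq V] :
    NetArch P V P (List (P × P × V)) :=
  ⟨fun p _ => p, fifoInsert, fifoRemove, []⟩

/-- Mailbox FIFO architecture: one FIFO channel per receiver. -/
def mb (P V : Type) [DecidableEq P] [DecidableEq V] :
    NetArch P V P (List (P × P × V)) :=
  ⟨fun _ q => q, fifoInsert, fifoRemove, []⟩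

/-- Monobox FIFO architecture: a single FIFO channel shared by all pairs. -/
def monob (P V : Type) [DecidableEq P] [DecidableEq V] :
    NetArch P V Unit (List (P × P × V)) :=
  ⟨fun _ _ => (), fifoInsert, fifoRemove, []⟩

/-- Bag architecture: a single channel holding a multiset of messages. -/
def bag (P V : Type) [DecidableEq P] [DecidableEq V] :
    NetArch P V Unit (Multiset (P × P × V)) :=
  ⟨fun _ _ => (), bagInsert, bagRemove, 0⟩

theorem fifoRemove_eq_some {M : Type} [DecidableEq M] {m : M} {b b' : List M} :
    fifoRemove m b = some b' ↔ b = m :: b' := by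
  cases b <;> simp [fifoRemove]

/-- Forward simulation: if `R` relates the initial states, and each defined step of `N₁` can be
matched by a step of `N₂` between related states, compliance transfers from `N₁` to `N₂`. -/
theorem NetArch.compliant_of_simulation {P V C₁ B₁ C₂ B₂ : Type} [DecidableEq C₁] [DecidableEq C₂]
    (N₁ : NetArch P V C₁ B₁) (N₂ : NetArch P V C₂ B₂) (R : (C₁ → B₁) → (C₂ → B₂) → Prop)
    (hinit : R N₁.init N₂.init)
    (hstep : ∀ e ξ η ξ', R ξ η → N₁.step e ξ = some ξ' → ∃ η', N₂.step e η = some η' ∧ R ξ' η')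
    (w : List (Event P V)) (hw : N₁.compliant w) : N₂.compliant w := by
  suffices H : ∀ (w : List (Event P V)) ξ η, R ξ η → (N₁.runFrom w ξ).isSome →
      (N₂.runFrom w η).isSome from H w _ _ hinit hw
  intro w
  induction w with
  | nil => intros; rfl
  | cons e w ih =>
    intro ξ η hR h
    cases hs : N₁.step e ξ with
    | none => simp [NetArch.runFrom, hs] at h
    | some ξ' =>
      obtain ⟨η', hη, hR'⟩ := hstep e ξ η ξ' hR hs
      simp only [NetArch.runFrom, hs, hη, Option.bind_some] at h ⊢
      exact ih _ _ hR' h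

theorem sb_compliant_p2p {P V : Type} [DecidableEq P] [DecidableEq V] (w : List (Event P V)) :
    (sb P V).compliant w → (p2p P V).compliant w := by
  refine NetArch.compliant_of_simulation _ _
    (fun ξ η => ∀ p q, η (p, q) = (ξ p).filter (fun m => decide (m.2.1 = q))) ?_ ?_ w
  · intro p q
    rfl
  · rintro (⟨p, q, v⟩ | ⟨p, q, v⟩) ξ η ξ' hR hs
    · simp only [NetArch.step, sb, fifoInsert, Option.map_some, Option.some.injEq] at hs
      subst hs
      refine ⟨_, rfl, fun p' q' => ?_⟩
      by_cases hp : p' = p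
      · subst hp
        by_cases hq : q' = q
        · subst hq
          simp [p2p, hR]
        · simp [p2p, hq, hR, Ne.symm hq]
      · simp [p2p, hp, hR]
    · simp only [NetArch.step, sb, Option.map_eq_some_iff, fifoRemove_eq_some] at hs
      obtain ⟨b, hb, rfl⟩ := hs
      have hη : η (p, q) = (p, q, v) :: b.filter (fun m => decide (m.2.1 = q)) := by
        simp [hR, hb]
      refine ⟨Function.update η (p, q) (b.filter (fun m => decide (m.2.1 = q))), ?_, ?_⟩
      · simp [NetArch.step, p2p, hη, fifoRemove]
      · intro p' q'
        by_cases hp : p' = p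
        · subst hp
          by_cases hq : q' = q
          · simp [hq]
          · simp [hq, hR, hb, Ne.symm hq]
        · simp [hp, hR]

theorem p2p_compliant_bag {P V : Type} [DecidableEq P] [DecidableEq V] (w : List (Event P V)) :
    (p2p P V).compliant w → (bag P V).compliant w := by
  refine NetArch.compliant_of_simulation _ _
    (fun ξ β => ∀ p q v, (β ()).count (p, q, v) = (ξ (p, q)).count (p, q, v)) ?_ ?_ w
  · intro p q v
    simp [NetArch.init, p2p, bag]
  · rintro (⟨p, q, v⟩ | ⟨p, q, v⟩) ξ β ξ' hR hs
    · simp only [NetArch.step, p2p, fifoInsert, Option.map_some, Option.some.injEq] at hs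
      subst hs
      refine ⟨_, rfl, fun p' q' v' => ?_⟩
      by_cases h : (p', q') = (p, q)
      · obtain ⟨rfl, rfl⟩ := Prod.mk.inj h
        by_cases hv : v' = v
        · subst hv
          simp [bag, hR]
        · simp [bag, hR, hv, Ne.symm hv]
      · have hne : (p', q', v') ≠ (p, q, v) := by
          simp only [ne_eq, Prod.mk.injEq] at h ⊢
          tauto
        rw [Function.update_of_ne h]
        simpa [bag, Multiset.count_cons_of_ne hne] using hR p' q' v'
    · simp only [NetArch.step, p2p, Option.map_eq_some_iff, fifoRemove_eq_some] at hs
      obtain ⟨b, hb, rfl⟩ := hs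
      have hmem : (p, q, v) ∈ β () := by
        rw [← Multiset.count_pos, hR, hb]
        simp
      refine ⟨Function.update β () ((β ()).erase (p, q, v)), ?_, ?_⟩
      · simp [NetArch.step, bag, bagRemove, hmem]
      · intro p' q' v'
        rw [Function.update_self]
        by_cases h : (p', q', v') = (p, q, v)
        · obtain ⟨rfl, rfl, rfl⟩ : p' = p ∧ q' = q ∧ v' = v := by simpa using h
          simp [hR, hb]
        · rw [Multiset.count_erase_of_ne h, hR]
          by_cases hc : (p', q') = (p, q)
          · obtain ⟨rfl, rfl⟩ := Prod.mk.inj hc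
            rw [hb, Function.update_self, List.count_cons_of_ne (Ne.symm h)]
          · rw [Function.update_of_ne hc]

/-- Every senderbox-channel-compliant word is p2p-channel-compliant, and every
p2p-channel-compliant word is bag-channel-compliant. -/
theorem sb_p2p_bag_compliance {P V : Type} [DecidableEq P] [DecidableEq V]
    (w : List (Event P V)) :
    ((sb P V).compliant w → (p2p P V).compliant w) ∧
    ((p2p P V).compliant w → (bag P V).compliant w) :=
  ⟨sb_compliant_p2p w, p2p_compliant_bag w⟩
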